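/- Let n and k be natural numbers with k ≤ n, and let X be a random variable on a probability space with 0 ≤ X ≤ 1 almost surely. Define the RCU bound ε_RCU = E[min{1, (2ᵏ − 1)·X}] and the average GRAND list size L̄_N = 2ⁿ · E[X]. Then L̄_N ≥ 2^{n−k} · ε_RCU. -/

import Mathlib

open MeasureTheory

/-- RCU lower bound on the average GRAND list size: with `X` playing the role of
the conditional probability `P[Γ_S(f) ≤ Γ_S(e) | λ]` (so `0 ≤ X ≤ 1` a.s.),
`ε_RCU = E[min{1, (2ᵏ−1)X}]` and `L̄_N = 2ⁿ·E[X]` satisfy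
`L̄_N ≥ 2^{n−k}·ε_RCU`. -/
theorem stmt10 (n k : ℕ) (hk : k ≤ n)
    {Ω : Type*} [MeasurableSpace Ω] (μ : Measure Ω) [IsProbabilityMeasure μ]
    (X : Ω → ℝ) (hX : Measurable X)
    (h0 : ∀ᵐ ω ∂μ, 0 ≤ X ω) (h1 : ∀ᵐ ω ∂μ, X ω ≤ 1) :
    (2 : ℝ) ^ (n - k) * ∫ ω, min 1 (((2 : ℝ) ^ k - 1) * X ω) ∂μ ≤
      (2 : ℝ) ^ n * ∫ ω, X ω ∂μ := by
  have hpow : (2 : ℝ) ^ n = 2 ^ (n - k) * 2 ^ k := by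
    rw [← pow_add, Nat.sub_add_cancel hk]
  have hone : (1 : ℝ) ≤ 2 ^ k := one_le_pow₀ (by norm_num)
  have hint : Integrable X μ :=
    Integrable.of_mem_Icc 0 1 hX.aemeasurable (by
      filter_upwards [h0, h1] with ω a b using ⟨a, b⟩)
  rw [hpow, mul_assoc, ← integral_const_mul ((2 : ℝ) ^ k) X]
  refine mul_le_mul_of_nonneg_left ?_ (by positivity)
  -- Pointwise, `min 1 ((2ᵏ - 1) X) ≤ (2ᵏ - 1) X ≤ 2ᵏ X` because `X ≥ 0`.
  refine integral_mono_of_nonneg ?_ (hint.const_mul _) ?_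
  · filter_upwards [h0] with ω a
    exact le_min zero_le_one (mul_nonneg (sub_nonneg.2 hone) a)
  · filter_upwards [h0] with ω a
    exact (min_le_right _ _).trans (mul_le_mul_of_nonneg_right (by linarith) a)
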